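/- arXiv:1203.0447 — 2 statements merged into one kernel-verified Lean document; each statement's English description precedes it below -/
import Mathlib

section
/- Let f be a probability density function on ℝ such that f(y)·|y|^{α+1}/c → 1 as |y| → ∞ for some constants α ∈ (0,1) and c ∈ (0,∞). Then the random walk with jump density f, i.e. the Markov chain on ℝ with transition kernel p(x,dy) = f(y−x) dy, is transient. -/
/-! Transience is proved by Fourier analysis. Let `φ` be the characteristic function of the jump
law `f(y) dy`, so that `p^n(x, ·)` has characteristic function `e^{itx} φ(t)^n` (`charFun_nStep`).

With `θ = arg φ(t)` one has `1 - |φ(t)| = ∫ (1 - cos (t y - θ)) f(y) dy`. The integrand is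
nonnegative, and over the single period `1/t ≤ y ≤ (1 + 2π)/t`, on which `f` is at least of order
`t^{a+1}`, the function `1 - cos (t y - θ)` has integral `2π/t`. Hence `1 - |φ(t)| ≥ k |t|^a` near
the origin (`exists_charFun_gap`).

The function `h(y) = ‖∫₀^ε e^{isy} ds‖²` dominates a multiple of the indicator of `[-T, T]` when
`ε` is small, and its integral against `p^n(x, ·)` is at most
`∫∫_{[0,ε]²} |φ(s - s')|^n ds ds'`, whatever `x` is (`measure_Icc_le_lintegral_charFun`). Summing
the geometric series bounds the potential of `[-T, T]` by a multiple of
`∫∫_{[0,ε]²} |s - s'|^{-a} ds ds'`, which is finite because `a < 1` (`exists_potential_bound`).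

Irreducibility holds with respect to Lebesgue measure on `[0, 1]`: as `f > 0` outside a bounded
set, two jumps suffice (`isIrreducibleWith_unitInterval`). -/

open MeasureTheory Filter Topology Set
open scoped ENNReal

/-- The one-step transition kernel `p(x, dy) = f_x(y - x) dy` of a stable-like chain. -/
noncomputable def stepKernel (f : ℝ → ℝ → ℝ) (x : ℝ) : Measure ℝ :=
  volume.withDensity fun y => ENNReal.ofReal (f x (y - x))

/-- The `n`-step transition kernel `p^n(x, ·)`. -/
noncomputable def nStep (f : ℝ → ℝ → ℝ) : ℕ → ℝ → Measure ℝ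
  | 0, x => Measure.dirac x
  | n + 1, x => (stepKernel f x).bind (nStep f n)

/-- `{f_x : x ∈ ℝ}` is a family of probability density functions on `ℝ`. -/
def IsDensityFamily (f : ℝ → ℝ → ℝ) : Prop :=
  ∀ x, Measurable (f x) ∧ (∀ y, 0 ≤ f x y) ∧ (∫ y, f x y) = 1

/-- Condition (C1): `x ↦ f_x(y)` is Borel measurable for every `y`. -/
def CondC1 (f : ℝ → ℝ → ℝ) : Prop := ∀ y, Measurable fun x => f x y

/-- Condition (C2): `f_x(y) ~ c(x) |y|^{-α(x)-1}` as `|y| → ∞`, for every `x`. -/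
def CondC2 (a c : ℝ → ℝ) (f : ℝ → ℝ → ℝ) : Prop :=
  ∀ x, Tendsto (fun y => f x y * |y| ^ (a x + 1) / c x) (cocompact ℝ) (nhds 1)

/-- Condition (C3) with constant `k > 0`: the convergence in (C2) is uniform in
`x ∉ [-k,k]`. -/
def CondC3 (a c : ℝ → ℝ) (f : ℝ → ℝ → ℝ) (k : ℝ) : Prop :=
  0 < k ∧ ∀ ε > (0 : ℝ), ∃ R : ℝ, ∀ y : ℝ, R ≤ |y| →
    ∀ x ∉ Icc (-k) k, |f x y * |y| ^ (a x + 1) / c x - 1| < ε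

/-- Condition (C4): `inf_{x ∈ C} c(x) > 0` for every compact `C ⊆ [-k,k]^c`. -/
def CondC4 (c : ℝ → ℝ) (k : ℝ) : Prop :=
  ∀ C : Set ℝ, IsCompact C → C ⊆ (Icc (-k) k)ᶜ → ∃ ε > (0 : ℝ), ∀ x ∈ C, ε ≤ c x

/-- Condition (C5): there is `l > 0` such that for every compact `C ⊆ [-l,l]^c` of
positive Lebesgue measure, `inf_{x ∈ [-k,k]} ∫_{C-x} f_x(y) dy > 0`. -/
def CondC5 (f : ℝ → ℝ → ℝ) (k l : ℝ) : Prop :=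
  0 < l ∧ ∀ C : Set ℝ, IsCompact C → C ⊆ (Icc (-l) l)ᶜ → 0 < volume C →
    ∃ ε > (0 : ℝ), ∀ x ∈ Icc (-k) k, ε ≤ ∫ y in C, f x (y - x)

/-- `φ`-irreducibility of the chain with jump densities `f`. -/
def IsIrreducibleWith (f : ℝ → ℝ → ℝ) (φ : Measure ℝ) : Prop :=
  ∀ x : ℝ, ∀ B : Set ℝ, MeasurableSet B → 0 < φ B → ∃ n : ℕ, 1 ≤ n ∧ 0 < nStep f n x B

/-- The chain is recurrent: it is `φ`-irreducible for some probability measure `φ` and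
`∑_n p^n(x,B) = ∞` for every `x` and every `B` with `φ(B) > 0`. -/
def IsRecurrentChain (f : ℝ → ℝ → ℝ) : Prop :=
  ∃ φ : Measure ℝ, IsProbabilityMeasure φ ∧ IsIrreducibleWith f φ ∧
    ∀ x : ℝ, ∀ B : Set ℝ, MeasurableSet B → 0 < φ B → (∑' n : ℕ, nStep f n x B) = ⊤

/-- The chain is transient: it is `φ`-irreducible for some probability measure `φ` and
there is a countable Borel cover of `ℝ` on each set of which the potential kernel is
uniformly bounded. -/
def IsTransientChain (f : ℝ → ℝ → ℝ) : Prop :=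
  (∃ φ : Measure ℝ, IsProbabilityMeasure φ ∧ IsIrreducibleWith f φ) ∧
    ∃ Bs : ℕ → Set ℝ, (∀ j, MeasurableSet (Bs j)) ∧ (⋃ j, Bs j) = univ ∧
      ∀ j, ∃ M : ℝ≥0∞, M ≠ ⊤ ∧ ∀ x : ℝ, (∑' n : ℕ, nStep f n x (Bs j)) ≤ M

/-- `C` is a small set: `p^n(x, ·) ≥ ν_n` on `C` for some `n ≥ 1` and nontrivial `ν_n`. -/
def IsSmallSet (f : ℝ → ℝ → ℝ) (C : Set ℝ) : Prop :=
  ∃ n : ℕ, 1 ≤ n ∧ ∃ ν : Measure ℝ, ν ≠ 0 ∧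
    ∀ x ∈ C, ∀ B : Set ℝ, MeasurableSet B → ν B ≤ nStep f n x B

/-- `C` is a petite set: `∑_n a(n) p^n(x, ·) ≥ ν_a` on `C` for some probability
distribution `a` on `ℕ` and nontrivial measure `ν_a`. -/
def IsPetiteSet (f : ℝ → ℝ → ℝ) (C : Set ℝ) : Prop :=
  ∃ a : ℕ → ℝ≥0∞, (∑' n, a n) = 1 ∧ ∃ ν : Measure ℝ, ν ≠ 0 ∧
    ∀ x ∈ C, ∀ B : Set ℝ, MeasurableSet B → ν B ≤ ∑' n : ℕ, a n * nStep f n x B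

/-- The digamma function `Ψ = Γ'/Γ`. -/
noncomputable def digammaFn (x : ℝ) : ℝ := deriv Real.Gamma x / Real.Gamma x

/-- The constant `R(α)` of the recurrence theorem. -/
noncomputable def Rconst (a : ℝ) : ℝ :=
  (∑' i : ℕ, 1 / ((i + 1 : ℝ) * (2 * (i + 1 : ℝ) - a))) - Real.log 2 / a -
    (1 / (2 * a)) * (digammaFn ((a + 1) / 2) - digammaFn (a / 2))

/-- The constant `T(α, β)` of the transience theorem, written via Gamma functions:
`T(α,β) = ₂F₁(-α,β,1-α;1) + β B(α+β,1-α) - α B(α+β,1-β)`. -/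
noncomputable def Tconst (a b : ℝ) : ℝ :=
  Real.Gamma (1 - a) * Real.Gamma (1 - b) / Real.Gamma (1 - a - b) +
    b * (Real.Gamma (a + b) * Real.Gamma (1 - a) / Real.Gamma (1 + b)) -
    a * (Real.Gamma (a + b) * Real.Gamma (1 - b) / Real.Gamma (1 + a))

/-- `hitProbLe f n x B = ℙ(τ_B ≤ n | X₀ = x)`, defined by first-step decomposition:
`ℙ_x(τ_B ≤ n+1) = ∫ p(x,dy) (1_B(y) + 1_{B^c}(y) ℙ_y(τ_B ≤ n))`. -/
noncomputable def hitProbLe (f : ℝ → ℝ → ℝ) : ℕ → ℝ → Set ℝ → ℝ≥0∞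
  | 0, _, _ => 0
  | n + 1, x, B =>
      ∫⁻ y, (B.indicator (fun _ => (1 : ℝ≥0∞)) y +
        Bᶜ.indicator (fun z => hitProbLe f n z B) y) ∂(stepKernel f x)

/-- `ψ` is a maximal irreducibility measure of the chain. -/
def IsMaximalIrrMeasure (f : ℝ → ℝ → ℝ) (ψ : Measure ℝ) : Prop :=
  IsProbabilityMeasure ψ ∧ IsIrreducibleWith f ψ ∧
    ∀ φ : Measure ℝ, IsProbabilityMeasure φ → IsIrreducibleWith f φ → φ ≪ ψ

/-- Harris recurrence: the chain is `ψ`-irreducible (`ψ` maximal) and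
`ℙ(τ_B < ∞ | X₀ = x) = 1` for all `x` and all `B` with `ψ(B) > 0`. -/
def IsHarrisRecurrentChain (f : ℝ → ℝ → ℝ) : Prop :=
  ∃ ψ : Measure ℝ, IsMaximalIrrMeasure f ψ ∧
    ∀ x : ℝ, ∀ B : Set ℝ, MeasurableSet B → 0 < ψ B →
      (⨆ n : ℕ, hitProbLe f n x B) = 1

/-! ### Transition probabilities and characteristic functions -/

/-- The jump law `f(y) dy` of the random walk. -/
noncomputable def jumpLaw (f : ℝ → ℝ) : Measure ℝ :=
  volume.withDensity fun y => ENNReal.ofReal (f y)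

lemma isProbabilityMeasure_jumpLaw {f : ℝ → ℝ} (hnn : ∀ y, 0 ≤ f y) (hint : (∫ y, f y) = 1) :
    IsProbabilityMeasure (jumpLaw f) := by
  have hi : Integrable f := by
    by_contra h
    rw [integral_undef h] at hint
    exact zero_ne_one hint
  refine ⟨?_⟩
  rw [jumpLaw, withDensity_apply _ MeasurableSet.univ, Measure.restrict_univ,
    ← ofReal_integral_eq_lintegral_ofReal hi (Eventually.of_forall hnn), hint, ENNReal.ofReal_one]

lemma stepKernel_eq_map (f : ℝ → ℝ) (x : ℝ) :
    stepKernel (fun _ => f) x = (jumpLaw f).map (x + ·) := by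
  ext s hs
  have hm : Measurable fun y : ℝ => x + y := by fun_prop
  rw [Measure.map_apply hm hs, stepKernel, jumpLaw, withDensity_apply _ hs,
    withDensity_apply _ (hm hs), ← lintegral_indicator hs, ← lintegral_indicator (hm hs),
    ← lintegral_add_left_eq_self _ x]
  refine lintegral_congr fun y => ?_
  by_cases h : x + y ∈ s
  · have h' : y ∈ (fun y => x + y) ⁻¹' s := h
    simp [h]
  · have h' : y ∉ (fun y => x + y) ⁻¹' s := h
    simp [h]

lemma measurable_stepKernel {f : ℝ → ℝ} (hmeas : Measurable f) :
    Measurable (stepKernel fun _ => f) := by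
  refine Measure.measurable_of_measurable_coe _ fun s hs => ?_
  simp only [stepKernel, withDensity_apply _ hs]
  have : Measurable (Function.uncurry fun x y : ℝ => ENNReal.ofReal (f (y - x))) := by
    unfold Function.uncurry; fun_prop
  exact this.lintegral_prod_right'

lemma measurable_nStep {f : ℝ → ℝ} (hmeas : Measurable f) (n : ℕ) :
    Measurable (nStep (fun _ => f) n) := by
  induction n with
  | zero => exact Measure.measurable_dirac
  | succ n ih => exact (Measure.measurable_bind' ih).comp (measurable_stepKernel hmeas)

lemma isProbabilityMeasure_stepKernel {f : ℝ → ℝ}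
    (hnn : ∀ y, 0 ≤ f y) (hint : (∫ y, f y) = 1) (x : ℝ) :
    IsProbabilityMeasure (stepKernel (fun _ => f) x) := by
  have := isProbabilityMeasure_jumpLaw hnn hint
  rw [stepKernel_eq_map]
  exact Measure.isProbabilityMeasure_map (by fun_prop)

lemma isProbabilityMeasure_nStep {f : ℝ → ℝ} (hmeas : Measurable f)
    (hnn : ∀ y, 0 ≤ f y) (hint : (∫ y, f y) = 1) (n : ℕ) (x : ℝ) :
    IsProbabilityMeasure (nStep (fun _ => f) n x) := by
  induction n generalizing x with
  | zero => exact Measure.dirac.isProbabilityMeasure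
  | succ n ih =>
    have := isProbabilityMeasure_stepKernel hnn hint x
    refine ⟨?_⟩
    rw [nStep, Measure.bind_apply MeasurableSet.univ (measurable_nStep hmeas n).aemeasurable]
    simp

lemma charFun_nStep {f : ℝ → ℝ} (hmeas : Measurable f)
    (hnn : ∀ y, 0 ≤ f y) (hint : (∫ y, f y) = 1) (n : ℕ) (x t : ℝ) :
    charFun (nStep (fun _ => f) n x) t =
      Complex.exp (t * x * Complex.I) * charFun (jumpLaw f) t ^ n := by
  induction n generalizing x with
  | zero => simp [nStep, charFun_dirac, mul_comm]
  | succ n ih =>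
    have := isProbabilityMeasure_stepKernel hnn hint
    have := isProbabilityMeasure_nStep hmeas hnn hint n
    have := isProbabilityMeasure_nStep hmeas hnn hint (n + 1) x
    let K : ProbabilityTheory.Kernel ℝ ℝ := ⟨stepKernel fun _ => f, measurable_stepKernel hmeas⟩
    let N : ProbabilityTheory.Kernel ℝ ℝ := ⟨nStep (fun _ => f) n, measurable_nStep hmeas n⟩
    have hcomp : nStep (fun _ => f) (n + 1) x = (N.comp K) x := by
      rw [ProbabilityTheory.Kernel.comp_apply]; rfl
    have hi : Integrable (fun y : ℝ => Complex.exp (t * y * Complex.I)) ((N.comp K) x) := by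
      rw [← hcomp]
      refine Integrable.of_bound (C := 1) (by fun_prop) (Eventually.of_forall fun y => ?_)
      rw [← Complex.ofReal_mul, Complex.norm_exp_ofReal_mul_I]
    have h1 : charFun (nStep (fun _ => f) (n + 1) x) t =
        ∫ y, charFun (nStep (fun _ => f) n y) t ∂(stepKernel (fun _ => f) x) := by
      rw [charFun_apply_real, hcomp, ProbabilityTheory.Kernel.integral_comp hi]
      simp only [charFun_apply_real]
      rfl
    simp_rw [h1, ih]
    rw [integral_mul_const, ← charFun_apply_real, stepKernel_eq_map, charFun_map_const_add]
    simp [pow_succ]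
    ring_nf

/-! ### Behaviour of the characteristic function at the origin -/

lemma exists_tail_lower_bound {f : ℝ → ℝ} {a c : ℝ} (hc : 0 < c)
    (htail : Tendsto (fun y => f y * |y| ^ (a + 1) / c) (cocompact ℝ) (nhds 1)) :
    ∃ R : ℝ, 0 < R ∧ ∀ y, R ≤ |y| → c / 2 * |y| ^ (-(a + 1)) ≤ f y := by
  have h := htail.eventually (lt_mem_nhds (show (1 / 2 : ℝ) < 1 by norm_num))
  rw [← Metric.cobounded_eq_cocompact, (Filter.hasBasis_cobounded_norm).eventually_iff] at h
  obtain ⟨R, -, hR⟩ := h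
  refine ⟨max R 1, by positivity, fun y hy => ?_⟩
  have hy1 : 0 < |y| := lt_of_lt_of_le one_pos ((le_max_right _ _).trans hy)
  have := hR (x := y) (by simpa using (le_max_left _ _).trans hy)
  rw [lt_div_iff₀ hc] at this
  have hp := Real.rpow_pos_of_pos hy1 (a + 1)
  rw [Real.rpow_neg hy1.le, ← div_eq_mul_inv, div_le_iff₀ hp]
  linarith

/-- `1 - |φ(t)|` is the average of `1 - cos (t y - θ)` with `θ = arg φ(t)`; one period of this
function inside the region where the tail bound holds already contributes a multiple of `|t|^a`. -/
lemma exists_charFun_gap {f : ℝ → ℝ} {a c : ℝ} (ha : 0 < a) (hc : 0 < c) (hmeas : Measurable f)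
    (hnn : ∀ y, 0 ≤ f y) (hint : (∫ y, f y) = 1)
    (htail : Tendsto (fun y => f y * |y| ^ (a + 1) / c) (cocompact ℝ) (nhds 1)) :
    ∃ k δ : ℝ, 0 < k ∧ 0 < δ ∧ ∀ t, |t| ≤ δ → k * |t| ^ a ≤ 1 - ‖charFun (jumpLaw f) t‖ := by
  obtain ⟨R, hR0, hR⟩ := exists_tail_lower_bound hc htail
  have hP := isProbabilityMeasure_jumpLaw hnn hint
  set q : ℝ := 1 + 2 * Real.pi with hq
  have hq0 : 0 < q := by positivity
  set k : ℝ := c / 2 * q ^ (-(a + 1)) * (2 * Real.pi) with hk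
  refine ⟨k, 1 / R, by positivity, by positivity, ?_⟩
  have hfi : Integrable f := by
    by_contra h
    rw [integral_undef h] at hint
    exact zero_ne_one hint
  have key : ∀ t, 0 < t → t ≤ 1 / R → k * t ^ a ≤ 1 - ‖charFun (jumpLaw f) t‖ := by
    intro t ht htR
    set z := charFun (jumpLaw f) t with hz
    set θ := Complex.arg z with hθ
    have hbd : ∀ y : ℝ, 0 ≤ 1 - Real.cos (t * y - θ) := fun y => by
      linarith [Real.cos_le_one (t * y - θ)]
    have hci : Integrable (fun y : ℝ => f y * (1 - Real.cos (t * y - θ))) := by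
      refine hfi.mul_bdd (c := 2) (by fun_prop) (Eventually.of_forall fun y => ?_)
      rw [Real.norm_of_nonneg (hbd y)]
      linarith [Real.neg_one_le_cos (t * y - θ)]
    have hexp : Integrable (fun y : ℝ => Complex.exp ((t * y - θ : ℝ) * Complex.I))
        (jumpLaw f) := by
      refine Integrable.of_bound (C := 1) (by fun_prop) (Eventually.of_forall fun y => ?_)
      rw [Complex.norm_exp_ofReal_mul_I]
    have hnorm : ‖z‖ = ∫ y, Real.cos (t * y - θ) ∂(jumpLaw f) := by
      have h1 : (‖z‖ : ℂ) = Complex.exp (-(θ * Complex.I)) * z := by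
        conv_rhs => rw [← Complex.norm_mul_exp_arg_mul_I z, ← hθ]
        rw [mul_left_comm, ← Complex.exp_add]
        simp
      have h2 : (‖z‖ : ℂ) = ∫ y, Complex.exp ((t * y - θ : ℝ) * Complex.I) ∂(jumpLaw f) := by
        rw [h1, hz, charFun_apply_real, ← integral_const_mul]
        refine integral_congr_ae (Eventually.of_forall fun y => ?_)
        simp only
        rw [← Complex.exp_add]
        congr 1
        push_cast
        ring
      have h3 := congrArg Complex.re h2
      rw [Complex.ofReal_re] at h3
      rw [h3]
      have := integral_re hexp
      simp only [RCLike.re_to_complex] at this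
      rw [← this]
      simp only [Complex.exp_ofReal_mul_I_re]
    have hone : 1 - ‖z‖ = ∫ y, f y * (1 - Real.cos (t * y - θ)) := by
      have hcosi : Integrable (fun y : ℝ => Real.cos (t * y - θ)) (jumpLaw f) := by
        refine Integrable.of_bound (C := 1) (by fun_prop) (Eventually.of_forall fun y => ?_)
        exact Real.abs_cos_le_one _
      have h1 : 1 - ‖z‖ = ∫ y, (1 - Real.cos (t * y - θ)) ∂(jumpLaw f) := by
        rw [integral_sub (integrable_const _) hcosi, hnorm]
        simp
      rw [h1, jumpLaw, integral_withDensity_eq_integral_toReal_smul hmeas.ennreal_ofReal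
        (Eventually.of_forall fun y => ENNReal.ofReal_lt_top)]
      refine integral_congr_ae (Eventually.of_forall fun y => ?_)
      simp [ENNReal.toReal_ofReal (hnn y)]
    set A : ℝ := 1 / t with hA
    -- `m` is the tail bound at the right end of the period `[1/t, q/t]`, hence a lower bound for `f`
    set m : ℝ := c / 2 * (q / t) ^ (-(a + 1)) with hm
    have hAB : A ≤ q / t := by
      rw [hA]; gcongr; linarith [Real.pi_pos]
    have hmf : ∀ y ∈ Ioc A (q / t), m ≤ f y := by
      intro y hy
      have hRA : R ≤ A := by
        rw [hA, le_div_iff₀ ht]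
        rw [le_div_iff₀ hR0] at htR
        linarith
      have hy0 : 0 < y := hR0.trans_le (hRA.trans hy.1.le)
      refine le_trans ?_ (hR y ((hRA.trans hy.1.le).trans (le_abs_self y)))
      rw [abs_of_pos hy0, hm]
      gcongr c / 2 * ?_
      exact Real.rpow_le_rpow_of_nonpos hy0 hy.2 (by linarith)
    have hperiod : ∫ y in Ioc A (q / t), (1 - Real.cos (t * y - θ)) = 2 * Real.pi / t := by
      rw [← intervalIntegral.integral_of_le hAB,
        intervalIntegral.integral_sub (by simp)
          (Continuous.intervalIntegrable (by fun_prop) _ _),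
        intervalIntegral.integral_comp_mul_sub (fun u => Real.cos u) ht.ne']
      have e1 : t * (q / t) - θ = (t * A - θ) + 2 * Real.pi := by
        rw [hA]; field_simp; ring
      rw [integral_cos, e1, Real.sin_add_two_pi]
      simp [hA, hq]
      ring
    have hlow : m * (2 * Real.pi / t) ≤ ∫ y, f y * (1 - Real.cos (t * y - θ)) := by
      rw [← hperiod, ← integral_const_mul]
      refine le_trans ?_ (setIntegral_le_integral (s := Ioc A (q / t)) hci
        (Eventually.of_forall fun y => mul_nonneg (hnn y) (hbd y)))
      refine setIntegral_mono_on ?_ hci.integrableOn measurableSet_Ioc fun y hy => ?_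
      · exact (Continuous.integrableOn_Icc (by fun_prop)).mono_set Ioc_subset_Icc_self
      · exact mul_le_mul_of_nonneg_right (hmf y hy) (hbd y)
    rw [hone]
    refine le_of_eq_of_le ?_ hlow
    rw [hm, hk, Real.div_rpow hq0.le ht.le, Real.rpow_neg ht.le, Real.rpow_add ht, Real.rpow_one]
    field_simp
  intro t ht
  rcases lt_trichotomy t 0 with h | h | h
  · rw [abs_of_neg h] at ht ⊢
    have := key (-t) (by linarith) ht
    rwa [charFun_neg, RCLike.norm_conj] at this
  · subst h
    rw [abs_zero, Real.zero_rpow ha.ne', charFun_zero]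
    simp
  · rw [abs_of_pos h] at ht ⊢
    exact key t h ht

/-! ### The potential of bounded intervals -/

/-- The inverse is taken in `ℝ≥0∞`, so that the integrand is `⊤` at the origin. -/
lemma lintegral_inv_rpow_lt_top {a k : ℝ} (ha1 : a < 1) (hk : 0 < k) :
    ∫⁻ u in Metric.ball (0 : ℝ) 1, (ENNReal.ofReal (k * |u| ^ a))⁻¹ < ⊤ := by
  have h : IntegrableOn (fun u : ℝ => k⁻¹ * ‖u‖ ^ (-a)) (Metric.ball 0 1) := by
    refine Integrable.const_mul ?_ _
    refine (integrableOn_fun_norm_addHaar (μ := volume) (E := ℝ)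
      (f := fun y : ℝ => y ^ (-a))).2 ?_
    simpa using (intervalIntegral.integrableOn_Ioo_rpow_iff one_pos).2 (by linarith : -1 < -a)
  have h2 := h.lintegral_lt_top
  refine lt_of_le_of_lt (le_of_eq ?_) h2
  refine lintegral_congr_ae (ae_restrict_of_ae ?_)
  have h0 : ∀ᵐ u : ℝ, u ≠ 0 := by
    simp [ae_iff]
  filter_upwards [h0] with u hu
  have : 0 < |u| := abs_pos.2 hu
  rw [← ENNReal.ofReal_inv_of_pos (by positivity), mul_inv, Real.norm_eq_abs,
    Real.rpow_neg this.le]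

/-- A smoothing inequality. The function `y ↦ ‖∫₀^ε e^{isy} ds‖²` is nonnegative, at least
`ε² / 4` where `ε |y| ≤ 1`, and is a superposition of the characters `y ↦ e^{i(s-s')y}`. -/
lemma measure_Icc_le_lintegral_charFun (ν : Measure ℝ) [IsProbabilityMeasure ν] {ε T : ℝ}
    (hε : 0 < ε) (hT : ε * T ≤ 1) :
    ENNReal.ofReal (ε ^ 2 / 4) * ν (Icc (-T) T) ≤
      ∫⁻ p, ‖charFun ν (p.1 - p.2)‖ₑ
        ∂((volume.restrict (Ioc 0 ε)).prod (volume.restrict (Ioc 0 ε))) := by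
  set l : Measure ℝ := volume.restrict (Ioc 0 ε) with hl
  let J : ℝ → ℂ := fun y => ∫ s, Complex.exp ((s * y : ℝ) * Complex.I) ∂l
  have hsq : ∀ y : ℝ, ((‖J y‖ ^ 2 : ℝ) : ℂ) =
      ∫ p, Complex.exp (((p.1 - p.2) * y : ℝ) * Complex.I) ∂(l.prod l) := by
    intro y
    have : ∀ p : ℝ × ℝ, Complex.exp (((p.1 - p.2) * y : ℝ) * Complex.I) =
        Complex.exp ((p.1 * y : ℝ) * Complex.I) *
          (starRingEnd ℂ) (Complex.exp ((p.2 * y : ℝ) * Complex.I)) := by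
      intro p
      rw [← Complex.exp_conj, ← Complex.exp_add]
      congr 1
      simp
      ring
    simp_rw [this]
    rw [integral_prod_mul (fun s : ℝ => Complex.exp ((s * y : ℝ) * Complex.I))
      (fun s : ℝ => (starRingEnd ℂ) (Complex.exp ((s * y : ℝ) * Complex.I))), integral_conj,
      Complex.mul_conj, Complex.normSq_eq_norm_sq]
  have hlow : ∀ y ∈ Icc (-T) T, ε ^ 2 / 4 ≤ ‖J y‖ ^ 2 := by
    intro y hy
    have hi : Integrable (fun s : ℝ => Complex.exp ((s * y : ℝ) * Complex.I)) l := by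
      refine Integrable.of_bound (C := 1) (by fun_prop) (Eventually.of_forall fun s => ?_)
      rw [Complex.norm_exp_ofReal_mul_I]
    have hre : (J y).re = ∫ s, Real.cos (s * y) ∂l := by
      have := integral_re hi
      simp only [RCLike.re_to_complex, Complex.exp_ofReal_mul_I_re] at this
      exact this.symm
    have h1 : ε / 2 ≤ (J y).re := by
      have hc : ∫ _s, (1 / 2 : ℝ) ∂l = ε / 2 := by
        simp [hl, hε.le]; ring
      rw [hre, ← hc]
      refine setIntegral_mono_on (integrable_const _) ?_ measurableSet_Ioc fun s hs => ?_
      · exact (Continuous.integrableOn_Icc (by fun_prop)).mono_set Ioc_subset_Icc_self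
      · have hy' : |y| ≤ T := abs_le.2 hy
        have hsy : |s * y| ≤ 1 := by
          rw [abs_mul, abs_of_pos hs.1]
          exact (mul_le_mul hs.2 hy' (abs_nonneg _) hε.le).trans hT
        have := Real.one_sub_sq_div_two_le_cos (x := s * y)
        nlinarith [abs_le.1 hsy]
    have h2 : ε / 2 ≤ ‖J y‖ := h1.trans (Complex.re_le_norm _)
    nlinarith
  have hfub : ∫ y, ((‖J y‖ ^ 2 : ℝ) : ℂ) ∂ν = ∫ p, charFun ν (p.1 - p.2) ∂(l.prod l) := by
    simp_rw [hsq, charFun_apply_real]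
    rw [integral_integral_swap]
    · simp
    · refine Integrable.of_bound (C := 1) ?_ (Eventually.of_forall fun s => ?_)
      · exact Continuous.aestronglyMeasurable (by unfold Function.uncurry; fun_prop)
      · simp only [Function.uncurry]
        rw [Complex.norm_exp_ofReal_mul_I]
  have hmeasJ : StronglyMeasurable J := by
    refine StronglyMeasurable.integral_prod_right (f := fun y s : ℝ =>
      Complex.exp ((s * y : ℝ) * Complex.I)) ?_
    exact Continuous.stronglyMeasurable (by unfold Function.uncurry; fun_prop)
  have hJb : ∀ y, ‖J y‖ ≤ ε := by
    intro y
    refine (norm_integral_le_of_norm_le_const (C := 1) (Eventually.of_forall fun s => ?_)).trans ?_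
    · rw [Complex.norm_exp_ofReal_mul_I]
    · simp [hl, hε.le]
  have hJi : Integrable (fun y => ‖J y‖ ^ 2) ν := by
    refine Integrable.of_bound (C := ε ^ 2) (hmeasJ.norm.pow 2).aestronglyMeasurable
      (Eventually.of_forall fun y => ?_)
    rw [Real.norm_of_nonneg (by positivity)]
    exact pow_le_pow_left₀ (norm_nonneg _) (hJb y) 2
  calc ENNReal.ofReal (ε ^ 2 / 4) * ν (Icc (-T) T)
      = ∫⁻ _y in Icc (-T) T, ENNReal.ofReal (ε ^ 2 / 4) ∂ν := by simp
    _ ≤ ∫⁻ y in Icc (-T) T, ENNReal.ofReal (‖J y‖ ^ 2) ∂ν :=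
        setLIntegral_mono' measurableSet_Icc fun y hy => ENNReal.ofReal_le_ofReal (hlow y hy)
    _ ≤ ∫⁻ y, ENNReal.ofReal (‖J y‖ ^ 2) ∂ν := setLIntegral_le_lintegral _ _
    _ = ENNReal.ofReal (∫ y, ‖J y‖ ^ 2 ∂ν) :=
        (ofReal_integral_eq_lintegral_ofReal hJi (Eventually.of_forall fun y => by positivity)).symm
    _ = ‖∫ p, charFun ν (p.1 - p.2) ∂(l.prod l)‖ₑ := by
        rw [← hfub, integral_complex_ofReal, ← ofReal_norm, Complex.norm_real,
          Real.norm_of_nonneg (integral_nonneg fun y => by positivity)]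
    _ ≤ _ := enorm_integral_le_lintegral_enorm _

/-- Every interval `[-T, T]` is uniformly transient. -/
lemma exists_potential_bound {f : ℝ → ℝ} {a c : ℝ} (ha : a ∈ Ioo (0 : ℝ) 1) (hc : 0 < c)
    (hmeas : Measurable f) (hnn : ∀ y, 0 ≤ f y) (hint : (∫ y, f y) = 1)
    (htail : Tendsto (fun y => f y * |y| ^ (a + 1) / c) (cocompact ℝ) (nhds 1)) {T : ℝ}
    (hT : 0 ≤ T) :
    ∃ M : ℝ≥0∞, M ≠ ⊤ ∧ ∀ x : ℝ, ∑' n, nStep (fun _ => f) n x (Icc (-T) T) ≤ M := by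
  obtain ⟨k, δ, hk, hδ, hgap⟩ := exists_charFun_gap ha.1 hc hmeas hnn hint htail
  have hP := isProbabilityMeasure_jumpLaw hnn hint
  have hPn := isProbabilityMeasure_nStep hmeas hnn hint
  -- `ε ≤ δ` keeps `s - s'` where the gap estimate holds; `ε ≤ 1 / (T + 1)` gives `ε T ≤ 1`
  set ε : ℝ := min δ (1 / (T + 1)) with hεdef
  have hε : 0 < ε := by positivity
  have hε1 : ε ≤ 1 / (T + 1) := min_le_right _ _
  have hεT : ε * T ≤ 1 := by
    rw [le_div_iff₀ (by positivity)] at hε1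
    linarith
  have hεle : ε ≤ 1 := hε1.trans (by rw [div_le_one (by positivity)]; linarith)
  set l : Measure ℝ := volume.restrict (Ioc 0 ε) with hl
  set φ := charFun (jumpLaw f) with hφ
  set I : ℝ≥0∞ := ∫⁻ u in Metric.ball (0 : ℝ) 1, (ENNReal.ofReal (k * |u| ^ a))⁻¹ with hI
  have hIlt : I < ⊤ := lintegral_inv_rpow_lt_top ha.2 hk
  have hφm : Measurable φ := measurable_charFun
  have hsum : ∫⁻ p, ∑' n : ℕ, ‖φ (p.1 - p.2)‖ₑ ^ n ∂(l.prod l) ≤ I * ENNReal.ofReal ε := by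
    rw [lintegral_prod_symm _ (by
      refine AEMeasurable.tsum fun n => ?_
      exact ((hφm.comp (measurable_fst.sub measurable_snd)).enorm.pow_const n).aemeasurable)]
    have hin : ∀ᵐ s ∂l, ∫⁻ r, ∑' n : ℕ, ‖φ (r - s)‖ₑ ^ n ∂l ≤ I := by
      refine (ae_restrict_iff' measurableSet_Ioc).2 (Eventually.of_forall fun s hs => ?_)
      rw [hI, hl, ← lintegral_indicator measurableSet_Ioc,
        ← lintegral_indicator Metric.isOpen_ball.measurableSet,
        ← lintegral_sub_right_eq_self
          ((Metric.ball (0 : ℝ) 1).indicator fun u => (ENNReal.ofReal (k * |u| ^ a))⁻¹) s]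
      refine lintegral_mono fun r => ?_
      by_cases hr : r ∈ Ioc 0 ε
      swap
      · rw [indicator_of_notMem hr]
        exact zero_le
      rw [indicator_of_mem hr]
      have habs : |r - s| < ε := by
        rw [abs_lt]; constructor <;> linarith [hr.1, hr.2, hs.1, hs.2]
      rw [indicator_of_mem (by
        rw [Metric.mem_ball, Real.dist_eq, sub_zero]; linarith), ENNReal.tsum_geometric]
      refine ENNReal.inv_le_inv.2 ?_
      rw [← ofReal_norm, ← ENNReal.ofReal_one, ← ENNReal.ofReal_sub _ (norm_nonneg _)]
      exact ENNReal.ofReal_le_ofReal (hgap _ (habs.le.trans (min_le_left _ _)))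
    refine (lintegral_mono_ae hin).trans ?_
    simp [hl]
  set C : ℝ≥0∞ := ENNReal.ofReal (ε ^ 2 / 4) with hC
  have hC0 : C ≠ 0 := by
    rw [hC]; exact (ENNReal.ofReal_pos.2 (by positivity)).ne'
  have hCt : C ≠ ⊤ := ENNReal.ofReal_ne_top
  refine ⟨C⁻¹ * (I * ENNReal.ofReal ε), ?_, fun x => ?_⟩
  · exact ENNReal.mul_ne_top (ENNReal.inv_ne_top.2 hC0)
      (ENNReal.mul_ne_top hIlt.ne ENNReal.ofReal_ne_top)
  · rw [← ENNReal.div_eq_inv_mul, ENNReal.le_div_iff_mul_le (Or.inl hC0) (Or.inl hCt), mul_comm,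
      ← ENNReal.tsum_mul_left]
    refine le_trans (ENNReal.tsum_le_tsum fun n =>
      measure_Icc_le_lintegral_charFun (nStep (fun _ => f) n x) hε hεT) ?_
    have hm : ∀ n : ℕ, Measurable fun p : ℝ × ℝ =>
        ‖charFun (nStep (fun _ => f) n x) (p.1 - p.2)‖ₑ := fun n =>
      (measurable_charFun.comp (measurable_fst.sub measurable_snd)).enorm
    rw [← lintegral_tsum fun n => (hm n).aemeasurable]
    refine le_of_eq_of_le (lintegral_congr fun p => tsum_congr fun n => ?_) hsum
    rw [charFun_nStep hmeas hnn hint, enorm_mul, enorm_pow, ← Complex.ofReal_mul, ← ofReal_norm,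
      Complex.norm_exp_ofReal_mul_I, ENNReal.ofReal_one, one_mul]

/-! ### Irreducibility and conclusion -/

/-- Two jumps suffice: the first one lands far to the right of both `x` and `[0, 1]`, the second
one jumps back onto any prescribed part of `[0, 1]`. -/
lemma isIrreducibleWith_unitInterval {f : ℝ → ℝ} (hmeas : Measurable f) {R : ℝ}
    (hR : ∀ y, R ≤ |y| → 0 < f y) :
    IsIrreducibleWith (fun _ => f) (volume.restrict (Icc 0 1)) := by
  intro x B hB hpos
  rw [Measure.restrict_apply hB] at hpos
  have hone : nStep (fun _ => f) 1 = stepKernel fun _ => f := by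
    funext y
    simp only [nStep]
    exact Measure.bind_dirac
  -- strict positivity of one step into any non-null set at distance at least `R`
  have hstep : ∀ (y : ℝ) (S D : Set ℝ), MeasurableSet S → D ⊆ S → MeasurableSet D →
      (∀ w ∈ D, R ≤ |w - y|) → 0 < volume D → 0 < stepKernel (fun _ => f) y S := by
    intro y S D hS hDS hD hfar hvol
    refine lt_of_lt_of_le ?_ (measure_mono hDS)
    rw [stepKernel, withDensity_apply _ hD]
    refine (setLIntegral_pos_iff (by fun_prop)).2 ?_
    refine lt_of_lt_of_le hvol (measure_mono fun w hw => ⟨?_, hw⟩)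
    exact (ENNReal.ofReal_pos.2 (hR _ (hfar w hw))).ne'
  have hm : Measurable fun y => stepKernel (fun _ => f) y B :=
    (Measure.measurable_coe hB).comp (measurable_stepKernel hmeas)
  refine ⟨2, by norm_num, ?_⟩
  rw [nStep, hone, Measure.bind_apply hB (measurable_stepKernel hmeas).aemeasurable,
    lintegral_pos_iff_support hm]
  refine hstep x _ (Ici (max (x + R) (1 + R))) ?_ ?_ measurableSet_Ici ?_ ?_
  · exact measurableSet_support hm
  · intro y hy
    refine (hstep y B (B ∩ Icc 0 1) hB inter_subset_left (hB.inter measurableSet_Icc)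
      (fun w hw => ?_) hpos).ne'
    have h1 : 1 + R ≤ y := (le_max_right _ _).trans hy
    rw [abs_sub_comm]
    exact le_trans (by linarith [hw.2.2]) (le_abs_self _)
  · intro w hw
    have h1 : x + R ≤ w := (le_max_left _ _).trans hw
    exact le_trans (by linarith) (le_abs_self _)
  · simp

/-- Corollary: a random walk whose jump density has power-law tails with exponent
`α + 1`, `α ∈ (0,1)`, is transient. -/
theorem transience_of_heavy_tailed_random_walk
    (f : ℝ → ℝ) (a c : ℝ)
    (ha : a ∈ Set.Ioo (0 : ℝ) 1) (hc : 0 < c)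
    (hmeas : Measurable f) (hnn : ∀ y, 0 ≤ f y) (hint : (∫ y, f y) = 1)
    (htail : Filter.Tendsto (fun y => f y * |y| ^ (a + 1) / c) (cocompact ℝ) (nhds 1)) :
    IsTransientChain (fun _ => f) := by 
  refine ⟨⟨volume.restrict (Icc 0 1), ⟨by simp⟩, ?_⟩, fun j => Icc (-(j : ℝ)) j,
    fun j => measurableSet_Icc, ?_, fun j =>
      exists_potential_bound ha hc hmeas hnn hint htail (Nat.cast_nonneg j)⟩
  · obtain ⟨R, hR0, hR⟩ := exists_tail_lower_bound hc htail
    refine isIrreducibleWith_unitInterval hmeas (R := R) fun y hy => lt_of_lt_of_le ?_ (hR y hy)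
    have : 0 < |y| := hR0.trans_le hy
    positivity
  · refine eq_univ_of_forall fun x => ?_
    obtain ⟨j, hj⟩ := exists_nat_ge |x|
    exact mem_iUnion.2 ⟨j, abs_le.1 hj⟩
end

section
/- The function α ↦ R(α) := ∑_{i=1}^∞ 1/(i(2i−α)) − (ln 2)/α − (1/(2α))·(Ψ((α+1)/2) − Ψ(α/2)) is strictly increasing on (1,2), satisfies R(1) = 0 and lim_{α→2⁻} R(α) = ∞; in particular R(α) > 0 for every α ∈ (1,2). -/
/-!
Write `D(x) = Ψ(x + 1/2) - Ψ(x)`, so that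
`R(α) = ∑ 1/(i(2i - α)) - (ln 2)/α - D(α/2)/(2α)`.

By the Bohr-Mollerup convexity of `log Γ`, the function `Ψ` is monotone on `(0, ∞)`; with
`Ψ(x + 1) = Ψ(x) + 1/x` this gives `0 ≤ D(x) ≤ 1/x`. Hence `D` vanishes at infinity, and telescoping
`D(x) = D(x + 1) + (1/x - 1/(x + 1/2))` yields
`D(x) = ∑_{k ≥ 0} (1/(x + k) - 1/(x + k + 1/2))`, whose terms are decreasing in `x`
(`hasSum_digammaGap`, `antitoneOn_digammaGap`). So the two subtracted terms of `R` are nonincreasing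
in `α`, while the series in `R` is strictly increasing: `R` is strictly increasing on `[1, 2)`.

At `α = 1`, the series in `R` is exactly the series for `D(1/2)`, and `D(1/2) = Ψ(1) - Ψ(1/2) = 2 ln 2`
by the known values of `Γ'`, whence `R(1) = 2 ln 2 - ln 2 - ln 2 = 0`, and positivity follows from strict
monotonicity. Finally the first term of the series is `1/(2 - α)`, and the subtracted terms are bounded
by their value at `1`, so `R(α) ≥ 1/(2 - α) - 2 ln 2 → ∞` as `α → 2⁻`.
-/

open MeasureTheory Filter Topology Set
open scoped ENNReal

lemma digammaFn_eq_deriv_log_Gamma {x : ℝ} (hx : 0 < x) :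
    digammaFn x = deriv (Real.log ∘ Real.Gamma) x := by
  rw [Function.comp_def, deriv.log (Real.differentiableAt_Gamma fun m ↦ ?_)
    (Real.Gamma_pos_of_pos hx).ne']
  · rfl
  · have : (0 : ℝ) ≤ m := m.cast_nonneg
    linarith

lemma differentiableAt_log_Gamma {x : ℝ} (hx : 0 < x) :
    DifferentiableAt ℝ (Real.log ∘ Real.Gamma) x := by
  refine (Real.differentiableAt_Gamma fun m ↦ ?_).log (Real.Gamma_pos_of_pos hx).ne'
  have : (0 : ℝ) ≤ m := m.cast_nonneg
  linarith

lemma monotoneOn_digammaFn : MonotoneOn digammaFn (Ioi 0) := by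
  intro x hx y hy hxy
  rw [digammaFn_eq_deriv_log_Gamma hx, digammaFn_eq_deriv_log_Gamma hy]
  exact Real.convexOn_log_Gamma.monotoneOn_deriv (fun z hz ↦ differentiableAt_log_Gamma hz) hx hy hxy

lemma digammaFn_add_one {x : ℝ} (hx : 0 < x) : digammaFn (x + 1) = digammaFn x + 1 / x := by
  rw [digammaFn_eq_deriv_log_Gamma hx, digammaFn_eq_deriv_log_Gamma (by positivity),
    ← deriv_comp_add_const, one_div, ← Real.deriv_log,
    ← deriv_add (differentiableAt_log_Gamma hx) (Real.differentiableAt_log hx.ne')]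
  apply EventuallyEq.deriv_eq
  filter_upwards [eventually_gt_nhds hx] with y hy
  simp only [Function.comp_apply, Pi.add_apply]
  rw [Real.Gamma_add_one hy.ne', Real.log_mul hy.ne' (Real.Gamma_pos_of_pos hy).ne', add_comm]

/-- The increment `Ψ(x + 1/2) - Ψ(x)` of the digamma function over a half-unit step. -/
noncomputable def digammaGap (x : ℝ) : ℝ := digammaFn (x + 1 / 2) - digammaFn x

lemma digammaGap_nonneg {x : ℝ} (hx : 0 < x) : 0 ≤ digammaGap x :=
  sub_nonneg.2 <| monotoneOn_digammaFn hx (mem_Ioi.2 (by positivity)) (by linarith)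

/-- Monotonicity of `Ψ` bounds the half-step increment by the full step `Ψ(x + 1) - Ψ(x) = 1/x`. -/
lemma digammaGap_le {x : ℝ} (hx : 0 < x) : digammaGap x ≤ 1 / x := by
  have h : digammaFn (x + 1 / 2) ≤ digammaFn (x + 1) :=
    monotoneOn_digammaFn (mem_Ioi.2 (by positivity)) (mem_Ioi.2 (by positivity)) (by linarith)
  rw [digammaFn_add_one hx] at h
  rw [digammaGap]
  linarith

lemma digammaGap_eq_add {x : ℝ} (hx : 0 < x) :
    digammaGap x = (1 / x - 1 / (x + 1 / 2)) + digammaGap (x + 1) := by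
  rw [digammaGap, digammaGap, show x + 1 + 1 / 2 = x + 1 / 2 + 1 by ring, digammaFn_add_one hx,
    digammaFn_add_one (by positivity)]
  ring

lemma digammaGap_eq_sum_add {x : ℝ} (hx : 0 < x) (n : ℕ) :
    digammaGap x =
      ∑ k ∈ Finset.range n, (1 / (x + k) - 1 / (x + k + 1 / 2)) + digammaGap (x + n) := by
  induction n with
  | zero => simp
  | succ n ih =>
    rw [Finset.sum_range_succ, ih, digammaGap_eq_add (x := x + n) (by positivity)]
    push_cast
    rw [← add_assoc x]
    ring

lemma hasSum_digammaGap {x : ℝ} (hx : 0 < x) :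
    HasSum (fun k : ℕ ↦ 1 / (x + k) - 1 / (x + k + 1 / 2)) (digammaGap x) := by
  rw [hasSum_iff_tendsto_nat_of_nonneg]
  · have hinf : Tendsto (fun n : ℕ ↦ x + (n : ℝ)) atTop atTop :=
      tendsto_atTop_add_const_left _ _ tendsto_natCast_atTop_atTop
    have h0 : Tendsto (fun n : ℕ ↦ digammaGap (x + n)) atTop (𝓝 0) := by
      refine squeeze_zero (fun n ↦ digammaGap_nonneg (by positivity))
        (fun n ↦ digammaGap_le (by positivity)) ?_
      simpa only [one_div, Function.comp_def] using tendsto_inv_atTop_zero.comp hinf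
    have h1 := (tendsto_const_nhds (x := digammaGap x)).sub h0
    rw [sub_zero] at h1
    refine h1.congr fun n ↦ ?_
    rw [digammaGap_eq_sum_add hx n]
    ring
  · intro k
    exact sub_nonneg.2 (one_div_le_one_div_of_le (by positivity) (by linarith))

lemma antitoneOn_digammaGap : AntitoneOn digammaGap (Ioi 0) := by
  intro x hx y hy hxy
  have hx' : 0 < x := hx
  have hy' : 0 < y := hy
  refine hasSum_le (fun k ↦ ?_) (hasSum_digammaGap hy') (hasSum_digammaGap hx')
  have e : ∀ z : ℝ, 0 < z →
      1 / (z + k) - 1 / (z + k + 1 / 2) = (1 / 2) / ((z + k) * (z + k + 1 / 2)) := by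
    intro z hz
    have h1 : z + k ≠ 0 := by positivity
    have h2 : z + k + 1 / 2 ≠ 0 := by positivity
    rw [div_sub_div _ _ h1 h2]
    ring
  rw [e x hx', e y hy']
  gcongr

lemma digammaGap_one_half : digammaGap (1 / 2) = 2 * Real.log 2 := by
  have hpi : √Real.pi ≠ 0 := (Real.sqrt_pos.2 Real.pi_pos).ne'
  rw [digammaGap, show (1 / 2 + 1 / 2 : ℝ) = 1 by norm_num, digammaFn, digammaFn,
    Real.hasDerivAt_Gamma_one.deriv, Real.hasDerivAt_Gamma_one_half.deriv, Real.Gamma_one,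
    Real.Gamma_one_half_eq]
  field_simp
  ring

/-- The sum of the two terms subtracted in `Rconst`. -/
noncomputable def Rcorr (a : ℝ) : ℝ := Real.log 2 / a + 1 / (2 * a) * digammaGap (a / 2)

lemma Rconst_eq (a : ℝ) :
    Rconst a = (∑' i : ℕ, 1 / ((i + 1 : ℝ) * (2 * (i + 1 : ℝ) - a))) - Rcorr a := by
  rw [Rconst, Rcorr, digammaGap, show (a + 1) / 2 = a / 2 + 1 / 2 by ring]
  ring

lemma antitoneOn_Rcorr : AntitoneOn Rcorr (Ioi 0) := by
  intro a ha b hb hab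
  have ha' : 0 < a := ha
  have hb' : 0 < b := hb
  have hgap : digammaGap (b / 2) ≤ digammaGap (a / 2) :=
    antitoneOn_digammaGap (mem_Ioi.2 (by positivity)) (mem_Ioi.2 (by positivity)) (by linarith)
  have hnn := digammaGap_nonneg (x := b / 2) (by positivity)
  have hlog : 0 ≤ Real.log 2 := Real.log_nonneg (by norm_num)
  unfold Rcorr
  gcongr

lemma Rcorr_one : Rcorr 1 = 2 * Real.log 2 := by
  rw [Rcorr, digammaGap_one_half]
  ring

lemma Rseries_denom_pos {a : ℝ} (ha : a < 2) (i : ℕ) : 0 < 2 * (i + 1 : ℝ) - a := by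
  have : (0 : ℝ) ≤ i := i.cast_nonneg
  linarith

lemma Rseries_term_nonneg {a : ℝ} (ha : a < 2) (i : ℕ) :
    0 ≤ 1 / ((i + 1 : ℝ) * (2 * (i + 1 : ℝ) - a)) := by
  have := Rseries_denom_pos ha i
  positivity

lemma summable_Rseries {a : ℝ} (ha0 : 0 ≤ a) (ha : a < 2) :
    Summable fun i : ℕ ↦ 1 / ((i + 1 : ℝ) * (2 * (i + 1 : ℝ) - a)) := by
  have hs : Summable fun i : ℕ ↦ 1 / (2 - a) * (1 / ((i + 1 : ℕ) : ℝ) ^ 2) :=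
    ((summable_nat_add_iff 1).2 (Real.summable_one_div_nat_pow.2 one_lt_two)).mul_left _
  refine Summable.of_nonneg_of_le (Rseries_term_nonneg ha) (fun i ↦ ?_) hs
  have h2 : 0 < 2 - a := by linarith
  have hi : (0 : ℝ) ≤ i := i.cast_nonneg
  rw [one_div_mul_one_div]
  push_cast
  apply one_div_le_one_div_of_le (by positivity)
  -- The elementary bound `(2 - a) (i + 1) ≤ 2 (i + 1) - a`, multiplied by `i + 1`.
  nlinarith [mul_nonneg (mul_nonneg ha0 hi) (by positivity : (0 : ℝ) ≤ i + 1)]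

lemma Rseries_one : ∑' i : ℕ, 1 / ((i + 1 : ℝ) * (2 * (i + 1 : ℝ) - 1)) = 2 * Real.log 2 := by
  rw [← digammaGap_one_half, ← (hasSum_digammaGap (x := 1 / 2) (by norm_num)).tsum_eq]
  congr 1
  ext i
  have hi : (0 : ℝ) ≤ i := i.cast_nonneg
  have h1 : (1 / 2 + i : ℝ) ≠ 0 := by positivity
  have h2 : (1 / 2 + i + 1 / 2 : ℝ) ≠ 0 := by positivity
  have h3 : (i + 1 : ℝ) ≠ 0 := by positivity
  have h4 := (Rseries_denom_pos one_lt_two i).ne'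
  rw [div_sub_div _ _ h1 h2, div_eq_div_iff (mul_ne_zero h3 h4) (mul_ne_zero h1 h2)]
  ring

lemma Rconst_one : Rconst 1 = 0 := by
  rw [Rconst_eq, Rseries_one, Rcorr_one, sub_self]

lemma strictMonoOn_Rconst : StrictMonoOn Rconst (Ico 1 2) := by
  intro a ha b hb hab
  have hcorr : Rcorr b ≤ Rcorr a :=
    antitoneOn_Rcorr (mem_Ioi.2 (by linarith [ha.1])) (mem_Ioi.2 (by linarith [hb.1])) hab.le
  have hlt (i : ℕ) : 1 / ((i + 1 : ℝ) * (2 * (i + 1 : ℝ) - a)) <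
      1 / ((i + 1 : ℝ) * (2 * (i + 1 : ℝ) - b)) := by
    have := Rseries_denom_pos hb.2 i
    apply one_div_lt_one_div_of_lt (by positivity)
    gcongr
  have hser := Summable.tsum_lt_tsum (fun i ↦ (hlt i).le) (hlt 0)
    (summable_Rseries (by linarith [ha.1]) ha.2) (summable_Rseries (by linarith [hb.1]) hb.2)
  rw [Rconst_eq, Rconst_eq]
  linarith

/-- The series in `Rconst` is at least its first term, and `Rcorr` is at most `Rcorr 1`. -/
lemma Rconst_lower_bound {a : ℝ} (ha : a ∈ Ico (1 : ℝ) 2) :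
    (2 - a)⁻¹ - 2 * Real.log 2 ≤ Rconst a := by
  have hcorr : Rcorr a ≤ Rcorr 1 :=
    antitoneOn_Rcorr (mem_Ioi.2 one_pos) (mem_Ioi.2 (by linarith [ha.1])) ha.1
  have hser := (summable_Rseries (by linarith [ha.1]) ha.2).le_tsum 0
    fun i _ ↦ Rseries_term_nonneg ha.2 i
  norm_num at hser
  rw [Rcorr_one] at hcorr
  rw [Rconst_eq]
  simp only [one_div, mul_inv_rev] at hser ⊢
  linarith

lemma tendsto_Rconst : Tendsto Rconst (𝓝[<] 2) atTop := by
  have h0 : Tendsto (fun a : ℝ ↦ 2 - a) (𝓝[<] 2) (𝓝[>] 0) := by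
    refine tendsto_nhdsWithin_iff.2 ⟨?_, ?_⟩
    · have : Tendsto (fun a : ℝ ↦ 2 - a) (𝓝 2) (𝓝 (2 - 2)) :=
        (continuous_const.sub continuous_id).tendsto 2
      rw [sub_self] at this
      exact this.mono_left nhdsWithin_le_nhds
    · filter_upwards [self_mem_nhdsWithin] with a ha
      exact sub_pos.2 (mem_Iio.1 ha)
  refine tendsto_atTop_mono' _ ?_
    (tendsto_atTop_add_const_right _ (-(2 * Real.log 2)) (tendsto_inv_nhdsGT_zero.comp h0))
  filter_upwards [Ico_mem_nhdsLT (one_lt_two : (1 : ℝ) < 2)] with a ha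
  exact Rconst_lower_bound ha

/-- Properties of the constant `R(α)`: it is strictly increasing on `(1,2)`, `R(1) = 0`,
`R(α) → ∞` as `α → 2⁻`, and `R(α) > 0` on `(1,2)`. -/
theorem Rconst_properties :
    StrictMonoOn Rconst (Set.Ioo 1 2) ∧ Rconst 1 = 0 ∧
    Filter.Tendsto Rconst (nhdsWithin 2 (Set.Iio 2)) Filter.atTop ∧
    ∀ a ∈ Set.Ioo (1 : ℝ) 2, 0 < Rconst a := by
  refine ⟨strictMonoOn_Rconst.mono Ioo_subset_Ico_self, Rconst_one, tendsto_Rconst, fun a ha ↦ ?_⟩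
  rw [← Rconst_one]
  exact strictMonoOn_Rconst (left_mem_Ico.2 one_lt_two) (Ioo_subset_Ico_self ha) ha.1
end
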